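/- Let 0 < m ≤ 1. There exists a constant c = c(m) > 0 such that for all u, ψ ∈ ℝ and all μ > 0 with ψ ≤ u and u^m ≤ ψ^m + μ^m, one has ((ψ^m + μ^m)^(1/m) − u)_+ ≤ c μ^m |u|^(1−m) + c μ, where (ψ^m + μ^m)^(1/m) is the signed power 1/m of the real number ψ^m + μ^m. -/

import Mathlib

/-!
Put `p = 1 / m ≥ 1` and `a = u^m`, so that `u = a^p` and `|u|^(1-m) = |a|^(p-1)`. Since signed
powers are monotone, `ψ ≤ u` reduces the estimate to bounding `(a + M)^p - a^p` with `M = μ^m`. The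
signed power `x ↦ x^p` has derivative `p |x|^(p-1)`, so this difference is at most
`p max(|a + M|, |a|)^(p-1) M`, and `max(|a + M|, |a|) ≤ |a| + M` then splits it into the two terms
of the claim.
-/

/-- Signed power: `a^k := |a|^(k-1) a`. -/
noncomputable def spow (a k : ℝ) : ℝ := |a| ^ (k - 1) * a

lemma spow_one (x : ℝ) : spow x 1 = x := by
  simp [spow]

lemma spow_neg (x k : ℝ) : spow (-x) k = -spow x k := by
  simp [spow]

lemma spow_of_nonneg {x k : ℝ} (hx : 0 ≤ x) (hk : k ≠ 0) : spow x k = x ^ k := by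
  have hk' : k - 1 + 1 ≠ 0 := by simpa using hk
  rw [spow, abs_of_nonneg hx, ← Real.rpow_add_one' hx hk', sub_add_cancel]

lemma abs_spow (x : ℝ) {k : ℝ} (hk : k ≠ 0) : |spow x k| = |x| ^ k := by
  rw [← spow_of_nonneg (abs_nonneg x) hk, spow, spow, abs_mul, abs_abs,
    abs_of_nonneg (Real.rpow_nonneg (abs_nonneg x) _)]

lemma spow_spow (x : ℝ) {j : ℝ} (hj : j ≠ 0) (k : ℝ) : spow (spow x j) k = spow x (j * k) := by
  rcases eq_or_ne x 0 with rfl | hx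
  · simp [spow]
  calc spow (spow x j) k = |x| ^ (j * (k - 1)) * (|x| ^ (j - 1) * x) := by
        rw [spow, abs_spow x hj, ← Real.rpow_mul (abs_nonneg x), spow]
    _ = |x| ^ (j * (k - 1) + (j - 1)) * x := by
        rw [Real.rpow_add (abs_pos.2 hx), mul_assoc]
    _ = spow x (j * k) := by
        rw [spow]
        ring_nf

lemma spow_monotone {k : ℝ} (hk : 0 < k) : Monotone (spow · k) := by
  refine monotone_of_odd_of_monotoneOn_nonneg (spow_neg · k) fun x hx y hy hxy ↦ ?_
  simpa only [spow_of_nonneg hx hk.ne', spow_of_nonneg hy hk.ne'] using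
    Real.rpow_le_rpow hx hxy hk.le

lemma hasDerivAt_spow {p : ℝ} (hp : 1 ≤ p) (x : ℝ) :
    HasDerivAt (spow · p) (p * |x| ^ (p - 1)) x := by
  rcases eq_or_ne x 0 with rfl | hx
  · have value_eq : p * |(0 : ℝ)| ^ (p - 1) = |(0 : ℝ)| ^ (p - 1) := by
      rcases hp.eq_or_lt with rfl | hp
      · exact one_mul _
      · simp [Real.zero_rpow (sub_pos.2 hp).ne']
    have continuous_pow : Continuous fun t : ℝ ↦ |t| ^ (p - 1) :=
      continuous_abs.rpow_const fun _ ↦ .inr (sub_nonneg.2 hp)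
    rw [value_eq, hasDerivAt_iff_tendsto_slope]
    refine (continuous_pow.tendsto 0).mono_left nhdsWithin_le_nhds |>.congr' ?_
    filter_upwards [self_mem_nhdsWithin] with t ht
    have ht : t ≠ 0 := ht
    simp [slope_def_field, spow, ht]
  · have hx' : |x| ≠ 0 := abs_ne_zero.2 hx
    refine (((hasDerivAt_abs hx).rpow_const (p := p - 1) (.inl hx')).mul
      (hasDerivAt_id' x)).congr_deriv ?_
    calc SignType.sign x * (p - 1) * |x| ^ (p - 1 - 1) * x + |x| ^ (p - 1) * 1
        = (p - 1) * (|x| ^ (p - 1) / |x|) * (SignType.sign x * x) + |x| ^ (p - 1) := by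
          rw [Real.rpow_sub_one hx' (p - 1)]
          ring
      _ = p * |x| ^ (p - 1) := by
          rw [sign_mul_self]
          field_simp
          ring

lemma abs_spow_sub_spow_le {p : ℝ} (hp : 1 ≤ p) (x y : ℝ) :
    |spow x p - spow y p| ≤ p * max |x| |y| ^ (p - 1) * |x - y| := by
  have abs_deriv_le {z : ℝ} (hz : z ∈ Set.Icc (-max |x| |y|) (max |x| |y|)) :
      |p * |z| ^ (p - 1)| ≤ p * max |x| |y| ^ (p - 1) := by
    rw [abs_of_nonneg (by positivity)]
    gcongr
    exact abs_le.2 hz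
  exact (convex_Icc _ _).norm_image_sub_le_of_norm_hasDerivWithin_le
    (fun z _ ↦ (hasDerivAt_spow hp z).hasDerivWithinAt) (fun z hz ↦ abs_deriv_le hz)
    (abs_le.1 (le_max_right _ _)) (abs_le.1 (le_max_left _ _))

lemma add_rpow_le_two_rpow_mul_rpow_add_rpow {a b q : ℝ} (ha : 0 ≤ a) (hb : 0 ≤ b)
    (hq : 0 ≤ q) : (a + b) ^ q ≤ 2 ^ q * (a ^ q + b ^ q) := by
  lift a to NNReal using ha
  lift b to NNReal using hb
  have h := ENNReal.add_rpow_le_two_rpow_mul_rpow_add_rpow a b hq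
  rw [← ENNReal.coe_ofNat] at h
  simp only [← ENNReal.coe_add, ← ENNReal.coe_rpow_of_nonneg _ hq, ← ENNReal.coe_mul] at h
  exact_mod_cast h

lemma abs_spow_add_sub_spow_le {p : ℝ} (hp : 1 ≤ p) (x h : ℝ) :
    |spow (x + h) p - spow x p| ≤ p * 2 ^ (p - 1) * (|h| * |x| ^ (p - 1) + |h| ^ p) := by
  have hp₁ : 0 ≤ p - 1 := sub_nonneg.2 hp
  calc |spow (x + h) p - spow x p|
      ≤ p * max |x + h| |x| ^ (p - 1) * |h| := by
        simpa only [add_sub_cancel_left] using abs_spow_sub_spow_le hp (x + h) x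
    _ ≤ p * (|x| + |h|) ^ (p - 1) * |h| := by
        gcongr
        exact max_le (abs_add_le x h) (le_add_of_nonneg_right (abs_nonneg h))
    _ ≤ p * (2 ^ (p - 1) * (|x| ^ (p - 1) + |h| ^ (p - 1))) * |h| := by
        gcongr
        exact add_rpow_le_two_rpow_mul_rpow_add_rpow (abs_nonneg x) (abs_nonneg h) hp₁
    _ = p * 2 ^ (p - 1) * (|h| * |x| ^ (p - 1) + |h| ^ p) := by
        have pow_eq : |h| ^ p = |h| ^ (p - 1) * |h| := by
          rw [← Real.rpow_add_one' (abs_nonneg h) (by linarith), sub_add_cancel]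
        rw [pow_eq]
        ring

theorem near_obstacle_estimate_general (m : ℝ) (hm0 : 0 < m) (hm1 : m ≤ 1) :
    ∃ c : ℝ, 0 < c ∧ ∀ u ψ μ : ℝ, 0 ≤ μ → ψ ≤ u →
      max (spow (spow ψ m + μ ^ m) (1 / m) - u) 0 ≤
        c * μ ^ m * |u| ^ (1 - m) + c * μ := by
  have hp : 1 ≤ 1 / m := one_le_one_div hm0 hm1
  refine ⟨1 / m * 2 ^ (1 / m - 1), by positivity, fun u ψ μ hμ hψu ↦ max_le ?_ (by positivity)⟩
  have hu : spow (spow u m) (1 / m) = u := by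
    rw [spow_spow u hm0.ne', mul_one_div_cancel hm0.ne', spow_one]
  have abs_μ_pow : |μ ^ m| = μ ^ m := abs_of_nonneg (Real.rpow_nonneg hμ m)
  have hμ_pow : (μ ^ m) ^ (1 / m) = μ := by
    rw [one_div, Real.rpow_rpow_inv hμ hm0.ne']
  have hu_pow : |spow u m| ^ (1 / m - 1) = |u| ^ (1 - m) := by
    rw [abs_spow u hm0.ne', ← Real.rpow_mul (abs_nonneg u), mul_sub, mul_one_div_cancel hm0.ne',
      mul_one]
  calc spow (spow ψ m + μ ^ m) (1 / m) - u
      ≤ spow (spow u m + μ ^ m) (1 / m) - u := by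
        gcongr
        exact spow_monotone (one_div_pos.2 hm0)
          (add_le_add_left (spow_monotone hm0 hψu) (μ ^ m))
    _ ≤ 1 / m * 2 ^ (1 / m - 1) * (μ ^ m * |u| ^ (1 - m) + μ) := by
        simpa only [hu, abs_μ_pow, hμ_pow, hu_pow] using
          le_of_abs_le (abs_spow_add_sub_spow_le hp (spow u m) (μ ^ m))
    _ = _ := by ring

/-- For `0 < m ≤ 1` there is `c = c(m) > 0` such that for all `u, ψ ∈ ℝ`, `μ > 0` with
`ψ ≤ u` and `u^m ≤ ψ^m + μ^m`:
`((ψ^m + μ^m)^(1/m) − u)_+ ≤ c μ^m |u|^(1−m) + c μ`. -/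
theorem near_obstacle_estimate (m : ℝ) (hm0 : 0 < m) (hm1 : m ≤ 1) :
    ∃ c : ℝ, 0 < c ∧ ∀ u ψ μ : ℝ, 0 < μ → ψ ≤ u →
      spow u m ≤ spow ψ m + μ ^ m →
      max (spow (spow ψ m + μ ^ m) (1 / m) - u) 0 ≤
        c * μ ^ m * |u| ^ (1 - m) + c * μ := by
  obtain ⟨c, hc, estimate⟩ := near_obstacle_estimate_general m hm0 hm1
  exact ⟨c, hc, fun u ψ μ hμ hψu _ ↦ estimate u ψ μ hμ.le hψu⟩
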